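/- Let M, N ⊆ ℝ^{n+q} be open sets and Φ : M → N a diffeomorphism. Let F : M → ℝ^{n+q}, G : M → ℝ^{(n+q)×m}, α : M → ℝᵐ, β : M → ℝ^{m×m} be smooth, and let A ∈ ℝ^{(n+q)×(n+q)}, B ∈ ℝ^{(n+q)×m} be matrices such that for all ξ ∈ M: DΦ(ξ)·(F(ξ) + G(ξ)α(ξ)) = A·Φ(ξ) and DΦ(ξ)·G(ξ)·β(ξ) = B. Let h > 0, let R_Φ be a discretization map on N, and suppose there exist matrices A_h ∈ ℝ^{(n+q)×(n+q)}, B_h ∈ ℝ^{(n+q)×m} such that for all z, z′ ∈ N and v ∈ ℝᵐ: [there exists y ∈ N with R_Φ(y, h(A·y + B·v)) = (z, z′)] if and only if z′ = A_h·z + B_h·v. Define the lifted discretization map R := (Φ⁻¹ × Φ⁻¹) ∘ R_Φ ∘ TΦ on M, where TΦ(ξ, ξ̇) := (Φ(ξ), DΦ(ξ)·ξ̇). Then R is a discretization map on M, and for all ξ_k, ξ_{k+1} ∈ M and v ∈ ℝᵐ, if there exists y ∈ M with R(y, h(F(y) + G(y)(α(y) + β(y)v))) = (ξ_k, ξ_{k+1}),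 then Φ(ξ_{k+1}) = A_h·Φ(ξ_k) + B_h·v; i.e., the induced discretization of the extended system ξ̇ = F(ξ) + G(ξ)μ under the static feedback μ = α(ξ) + β(ξ)v is transformed by z = Φ(ξ) into the linear discrete-time system z_{k+1} = A_h·z_k + B_h·v_k. -/

import Mathlib

/-!
The lifted map is the conjugate of `RΦ` by the diffeomorphism `Φ`, and every discretization-map
axiom is invariant under this conjugation. Smoothness and openness of the domain follow from
smoothness of the tangent map `TΦ` (`contDiffOn_tangentMap`). For the derivative condition, the
chain rule (`fderiv_lifted_component`) gives, for each component `i`,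
`D_v Rⁱ(x, 0) = DΨ(Φ x) ∘ D_v RΦⁱ(Φ x, 0) ∘ DΦ(x)`; the difference of the two components is
`DΨ(Φ x) ∘ DΦ(x)`, which is the identity since `Ψ ∘ Φ = id` near `x`.

For the scheme, the linearization hypotheses say that `TΦ` sends the closed-loop increment at `y`
to `h (A Φ(y) + B v)`. Hence a step of the lifted scheme from `ξk` to `ξk1` is, after applying `Φ`,
a step of the linear scheme from `Φ ξk` to `Φ ξk1`.
-/

open Matrix

/-- A discretization map on an open set `U ⊆ ℝᵈ`. -/
def IsDiscretizationMap {d : ℕ} (U : Set (Fin d → ℝ))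
    (O : Set ((Fin d → ℝ) × (Fin d → ℝ)))
    (Rd : ((Fin d → ℝ) × (Fin d → ℝ)) → ((Fin d → ℝ) × (Fin d → ℝ))) : Prop :=
  IsOpen O ∧ O ⊆ U ×ˢ (Set.univ : Set (Fin d → ℝ)) ∧
  (∀ x ∈ U, ((x, (0 : Fin d → ℝ))) ∈ O) ∧
  ContDiffOn ℝ (⊤ : ℕ∞) Rd O ∧
  (∀ p ∈ O, (Rd p).1 ∈ U ∧ (Rd p).2 ∈ U) ∧
  (∀ x ∈ U, Rd (x, 0) = (x, x)) ∧
  (∀ x ∈ U,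
    fderiv ℝ (fun v => (Rd (x, v)).2) 0 - fderiv ℝ (fun v => (Rd (x, v)).1) 0
      = ContinuousLinearMap.id ℝ (Fin d → ℝ))

/-- Differentiating at `0` the map `v ↦ Ψ (r (Φ x, DΦ(x) v))`, where `r` stands for a component of
a discretization map, so that `r (y, 0) = y`. Here `y` is `Φ x`
and `L` is `DΦ(x)`. -/
lemma fderiv_lifted_component {E : Type*} [NormedAddCommGroup E] [NormedSpace ℝ E]
    {Ψ : E → E} {r : E × E → E} {y : E} (L : E →L[ℝ] E)
    (hΨ : DifferentiableAt ℝ Ψ y) (hr : DifferentiableAt ℝ r (y, 0)) (hy : r (y, 0) = y) :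
    fderiv ℝ (fun v => Ψ (r (y, L v))) 0
      = (fderiv ℝ Ψ y).comp ((fderiv ℝ (fun w => r (y, w)) 0).comp L) := by
  have hslice : DifferentiableAt ℝ (fun w => r (y, w)) (L 0) := by
    rw [map_zero]
    exact hr.comp (0 : E) (by fun_prop)
  have hinner : HasFDerivAt (fun v => r (y, L v))
      ((fderiv ℝ (fun w => r (y, w)) 0).comp L) 0 := by
    have := hslice.hasFDerivAt.comp (0 : E) L.hasFDerivAt
    rwa [map_zero] at this
  have hout : HasFDerivAt Ψ (fderiv ℝ Ψ y) (r (y, L 0)) := by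
    rw [map_zero, hy]
    exact hΨ.hasFDerivAt
  exact (hout.comp (0 : E) hinner).fderiv

/-- The tangent map `TΦ (ξ, w) = (Φ ξ, DΦ(ξ) w)` of a map smooth on an open set is smooth. -/
lemma contDiffOn_tangentMap {E : Type*} [NormedAddCommGroup E] [NormedSpace ℝ E]
    {Φ : E → E} {M : Set E} (hM : IsOpen M) (hΦ : ContDiffOn ℝ (⊤ : ℕ∞) Φ M) :
    ContDiffOn ℝ (⊤ : ℕ∞) (fun p : E × E => (Φ p.1, fderiv ℝ Φ p.1 p.2))
      (M ×ˢ (Set.univ : Set E)) := by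
  have hfst : ContDiffOn ℝ (⊤ : ℕ∞) (Prod.fst : E × E → E) (M ×ˢ (Set.univ : Set E)) :=
    contDiff_fst.contDiffOn
  have hmaps : Set.MapsTo (Prod.fst : E × E → E) (M ×ˢ (Set.univ : Set E)) M := fun p hp => hp.1
  have hD : ContDiffOn ℝ (⊤ : ℕ∞) (fderiv ℝ Φ) M := hΦ.fderiv_of_isOpen hM (by simp)
  exact (hΦ.comp hfst hmaps).prodMk ((hD.comp hfst hmaps).clm_apply contDiff_snd.contDiffOn)

/-- Main theorem: let `Φ : M → N` be a diffeomorphism linearizing the extended system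
`ξ̇ = F(ξ) + G(ξ)μ` via the static feedback `μ = α(ξ) + β(ξ)v`, i.e.
`DΦ(ξ)·(F(ξ)+G(ξ)α(ξ)) = A·Φ(ξ)` and `DΦ(ξ)·G(ξ)·β(ξ) = B`.  Suppose the discretization map
`R_Φ` on `N` discretizes the linear system `ż = Az + Bv` into `z' = A_h z + B_h v`.  Then the
lifted map `R := (Φ⁻¹ × Φ⁻¹) ∘ R_Φ ∘ TΦ` is a discretization map on `M`, and the induced
discretization of the extended system, under the same feedback `μ = α(ξ) + β(ξ)v`, is
transformed by `z = Φ(ξ)` into the linear discrete-time system `z_{k+1} = A_h z_k + B_h v_k`. -/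
theorem lifted_discretization_is_feedback_linearizable {n q m : ℕ}
    (M N : Set (Fin (n + q) → ℝ)) (hM : IsOpen M) (hN : IsOpen N)
    (Φ Ψ : (Fin (n + q) → ℝ) → (Fin (n + q) → ℝ))
    (hΦsmooth : ContDiffOn ℝ (⊤ : ℕ∞) Φ M)
    (hΨsmooth : ContDiffOn ℝ (⊤ : ℕ∞) Ψ N)
    (hΦmaps : Φ '' M = N)
    (hΨΦ : ∀ ξ ∈ M, Ψ (Φ ξ) = ξ)
    (hΦΨ : ∀ z ∈ N, Φ (Ψ z) = z)
    -- the extended dynamics and the linearizing static feedback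
    (F : (Fin (n + q) → ℝ) → (Fin (n + q) → ℝ))
    (G : (Fin (n + q) → ℝ) → Matrix (Fin (n + q)) (Fin m) ℝ)
    (α : (Fin (n + q) → ℝ) → (Fin m → ℝ))
    (β : (Fin (n + q) → ℝ) → Matrix (Fin m) (Fin m) ℝ)
    (hFsmooth : ContDiffOn ℝ (⊤ : ℕ∞) F M)
    (hGsmooth : ∀ i j, ContDiffOn ℝ (⊤ : ℕ∞) (fun ξ => G ξ i j) M)
    (hαsmooth : ContDiffOn ℝ (⊤ : ℕ∞) α M)
    (hβsmooth : ∀ i j, ContDiffOn ℝ (⊤ : ℕ∞) (fun ξ => β ξ i j) M)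
    (A : Matrix (Fin (n + q)) (Fin (n + q)) ℝ) (B : Matrix (Fin (n + q)) (Fin m) ℝ)
    (hlinA : ∀ ξ ∈ M, fderiv ℝ Φ ξ (F ξ + G ξ *ᵥ α ξ) = A *ᵥ Φ ξ)
    (hlinB : ∀ ξ ∈ M, ∀ v : Fin m → ℝ, fderiv ℝ Φ ξ (G ξ *ᵥ (β ξ *ᵥ v)) = B *ᵥ v)
    -- a discretization map on `N` that discretizes `ż = Az + Bv` into `z' = A_h z + B_h v`
    (h : ℝ) (hh : 0 < h)
    (OΦ : Set ((Fin (n + q) → ℝ) × (Fin (n + q) → ℝ)))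
    (RΦ : ((Fin (n + q) → ℝ) × (Fin (n + q) → ℝ)) → ((Fin (n + q) → ℝ) × (Fin (n + q) → ℝ)))
    (hRΦ : IsDiscretizationMap N OΦ RΦ)
    (Ah : Matrix (Fin (n + q)) (Fin (n + q)) ℝ) (Bh : Matrix (Fin (n + q)) (Fin m) ℝ)
    (hlinscheme : ∀ z ∈ N, ∀ z' ∈ N, ∀ v : Fin m → ℝ,
      (∃ y ∈ N, (y, h • (A *ᵥ y + B *ᵥ v)) ∈ OΦ ∧
          RΦ (y, h • (A *ᵥ y + B *ᵥ v)) = (z, z')) ↔ z' = Ah *ᵥ z + Bh *ᵥ v) :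
    -- the lifted map `R = (Φ⁻¹ × Φ⁻¹) ∘ R_Φ ∘ TΦ` is a discretization map on `M` ...
    IsDiscretizationMap M
      {p : (Fin (n + q) → ℝ) × (Fin (n + q) → ℝ) |
        p.1 ∈ M ∧ (Φ p.1, fderiv ℝ Φ p.1 p.2) ∈ OΦ}
      (fun p => (Ψ (RΦ (Φ p.1, fderiv ℝ Φ p.1 p.2)).1, Ψ (RΦ (Φ p.1, fderiv ℝ Φ p.1 p.2)).2))
    ∧
    -- ... and the induced discretization of the extended system under the feedback
    -- `μ = α + βv` is mapped by `Φ` onto `z_{k+1} = A_h z_k + B_h v_k`.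
    (∀ ξk ∈ M, ∀ ξk1 ∈ M, ∀ v : Fin m → ℝ,
      (∃ y ∈ M, (Φ y, fderiv ℝ Φ y (h • (F y + G y *ᵥ (α y + β y *ᵥ v)))) ∈ OΦ ∧
        (Ψ (RΦ (Φ y, fderiv ℝ Φ y (h • (F y + G y *ᵥ (α y + β y *ᵥ v))))).1,
         Ψ (RΦ (Φ y, fderiv ℝ Φ y (h • (F y + G y *ᵥ (α y + β y *ᵥ v))))).2) = (ξk, ξk1)) →
      Φ ξk1 = Ah *ᵥ Φ ξk + Bh *ᵥ v) := by
  obtain ⟨hO, hOsub, hO0, hRsm, hRmem, hR0, hRd⟩ := hRΦ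
  have hΦN : ∀ ξ ∈ M, Φ ξ ∈ N := fun ξ hξ => hΦmaps ▸ Set.mem_image_of_mem Φ hξ
  have hΨM : ∀ z ∈ N, Ψ z ∈ M := by
    intro z hz
    rw [← hΦmaps] at hz
    obtain ⟨ξ, hξ, rfl⟩ := hz
    rwa [hΨΦ ξ hξ]
  have hT := contDiffOn_tangentMap hM hΦsmooth
  refine ⟨⟨?_, ?_, ?_, ?_, ?_, ?_, ?_⟩, ?_⟩
  · have hopen := hT.continuousOn.isOpen_inter_preimage (hM.prod isOpen_univ) hO
    refine (congrArg IsOpen (Set.ext fun p => ?_)).mp hopen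
    simp
  · exact fun p hp => ⟨hp.1, trivial⟩
  · intro x hx
    refine ⟨hx, ?_⟩
    simpa using hO0 _ (hΦN x hx)
  · have hRT := hRsm.comp (hT.mono fun p hp => ⟨hp.1, trivial⟩) (fun p hp => hp.2 :
      Set.MapsTo _ {p : (Fin (n + q) → ℝ) × (Fin (n + q) → ℝ) |
        p.1 ∈ M ∧ (Φ p.1, fderiv ℝ Φ p.1 p.2) ∈ OΦ} OΦ)
    exact (hΨsmooth.comp (contDiff_fst.comp_contDiffOn hRT) fun p hp => (hRmem _ hp.2).1).prodMk
      (hΨsmooth.comp (contDiff_snd.comp_contDiffOn hRT) fun p hp => (hRmem _ hp.2).2)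
  · exact fun p hp => ⟨hΨM _ (hRmem _ hp.2).1, hΨM _ (hRmem _ hp.2).2⟩
  · intro x hx
    simp [hR0 _ (hΦN x hx), hΨΦ x hx]
  · intro x hx
    have hy := hΦN x hx
    have hΨd : DifferentiableAt ℝ Ψ (Φ x) :=
      (hΨsmooth.differentiableOn (by simp)).differentiableAt (hN.mem_nhds hy)
    have hΦd : DifferentiableAt ℝ Φ x :=
      (hΦsmooth.differentiableOn (by simp)).differentiableAt (hM.mem_nhds hx)
    have hR : DifferentiableAt ℝ RΦ (Φ x, 0) :=
      (hRsm.differentiableOn (by simp)).differentiableAt (hO.mem_nhds (hO0 _ hy))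
    have h1 := fderiv_lifted_component (r := fun p => (RΦ p).1) (fderiv ℝ Φ x) hΨd hR.fst
      (by simp [hR0 _ hy])
    have h2 := fderiv_lifted_component (r := fun p => (RΦ p).2) (fderiv ℝ Φ x) hΨd hR.snd
      (by simp [hR0 _ hy])
    have hinv : (fderiv ℝ Ψ (Φ x)).comp (fderiv ℝ Φ x)
        = ContinuousLinearMap.id ℝ (Fin (n + q) → ℝ) := by
      rw [← fderiv_comp x hΨd hΦd, ← fderiv_id (𝕜 := ℝ) (x := x)]
      apply Filter.EventuallyEq.fderiv_eq
      filter_upwards [hM.mem_nhds hx] with ξ hξ using hΨΦ ξ hξ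
    dsimp only at h1 h2 ⊢
    rw [h1, h2, ← ContinuousLinearMap.comp_sub, ← ContinuousLinearMap.sub_comp, hRd _ hy,
      ContinuousLinearMap.id_comp, hinv]
  · rintro ξk hξk ξk1 hξk1 v ⟨y, hyM, hyO, hstep⟩
    have hvel : fderiv ℝ Φ y (h • (F y + G y *ᵥ (α y + β y *ᵥ v)))
        = h • (A *ᵥ Φ y + B *ᵥ v) := by
      rw [Matrix.mulVec_add, ← add_assoc, map_smul, map_add, hlinA y hyM, hlinB y hyM]
    rw [hvel] at hyO hstep
    obtain ⟨hm1, hm2⟩ := hRmem _ hyO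
    obtain ⟨rfl, rfl⟩ := Prod.mk.inj hstep
    rw [hΦΨ _ hm1, hΦΨ _ hm2]
    exact (hlinscheme _ hm1 _ hm2 v).1 ⟨Φ y, hΦN y hyM, hyO, rfl⟩
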